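/- There exists a constant c > 0, independent of x and q, such that for every x ∈ (0,∞) and every q ∈ ℝ³ with |q| ≥ 3 one has I₂^{(q)}(x) ≥ c x³/(x⁴ + |q|⁴). -/

import Mathlib

/-!
Only the second summand of `I₂^{(q)}` contributes when `|q| > 1`, and it suffices to integrate over
momenta `p` in the ball of radius `1 / 3` about `q`, where `|p|` is comparable to `|q|`. On the lune
`|r| < x < |r - p|` the energy denominator is at most `3 |q| (|q| + x)`. For `0 < m ≤ min x |p|`,
the lune contains every `r` in the spherical shell `x² - m² < |r|² < x²` with `⟨r, p⟩ ≤ 0`; by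
symmetry this is at least half of the shell, whose volume is at least a constant times `x m²`.
Taking `m` of order `min x |q|` gives the bound.
-/

open MeasureTheory
open scoped ENNReal

noncomputable abbrev E3 := EuclideanSpace ℝ (Fin 3)

/-- The Belyakov-type integral `I₂^{(q)}(x)` of Lemma B.2, with the Dirac deltas
`δ(r-q)` and `δ(r+p-q)` evaluated explicitly. -/
noncomputable def belyakovI2q (x : ℝ) (q : E3) : ℝ≥0∞ :=
  ∫⁻ p : E3,
    ({p : E3 | ‖q‖ < 1 ∧ 1 < ‖q + p‖}.indicator
      (fun p => ∫⁻ r' in {r' : E3 | ‖r'‖ < x ∧ x < ‖r' - p‖},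
        ENNReal.ofReal (1 / (‖q + p‖ ^ 2 - ‖q‖ ^ 2 + ‖r' - p‖ ^ 2 - ‖r'‖ ^ 2) ^ 2)) p)
    +
    ({p : E3 | ‖q - p‖ < 1 ∧ 1 < ‖q‖}.indicator
      (fun p => ∫⁻ r' in {r' : E3 | ‖r'‖ < x ∧ x < ‖r' - p‖},
        ENNReal.ofReal (1 / (‖q‖ ^ 2 - ‖q - p‖ ^ 2 + ‖r' - p‖ ^ 2 - ‖r'‖ ^ 2) ^ 2)) p)

open Metric Module

lemma pow_mul_pow_sub_pow_le {R : Type*} [CommRing R] [LinearOrder R] [IsStrictOrderedRing R]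
    {s x : R} (hs : 0 ≤ s) (hsx : s ≤ x) (n k : ℕ) :
    x ^ n * (x ^ k - s ^ k) ≤ x ^ (n + k) - s ^ (n + k) := by
  have h : s ^ n * s ^ k ≤ x ^ n * s ^ k := by gcongr
  linear_combination h

lemma pow_div_pow_four_add_pow_four_le {x y : ℝ} (hx : 0 < x) (hy : 0 < y) (n : ℕ) :
    1 / 162 * x ^ (n + 2) / (x ^ 4 + y ^ 4) ≤
      1 / (3 * y * (y + x)) ^ 2 * (x ^ n * (2 / 3 * min x y) ^ 2 / 2) := by
  have hM : 0 < max x y := lt_max_of_lt_left hx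
  have hmin : min x y = x * y / max x y := by
    rw [eq_div_iff hM.ne', min_mul_max]
  have hmax : max x y ^ 4 ≤ x ^ 4 + y ^ 4 := by
    rcases max_choice x y with h | h <;> rw [h]
    · exact le_add_of_nonneg_right (by positivity)
    · exact le_add_of_nonneg_left (by positivity)
  have hadd : y + x ≤ 2 * max x y := by
    linarith [le_max_left x y, le_max_right x y]
  calc 1 / 162 * x ^ (n + 2) / (x ^ 4 + y ^ 4)
      ≤ 1 / 162 * x ^ (n + 2) / max x y ^ 4 := by gcongr
    _ = 1 / (3 * y * (2 * max x y)) ^ 2 * (x ^ n * (2 / 3 * min x y) ^ 2 / 2) := by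
        rw [hmin]
        field_simp
        ring
    _ ≤ 1 / (3 * y * (y + x)) ^ 2 * (x ^ n * (2 / 3 * min x y) ^ 2 / 2) := by gcongr

lemma measure_le_two_mul_measure_inter_nonpos_of_odd {G : Type*} [InvolutiveNeg G]
    [MeasurableSpace G] [MeasurableNeg G] (μ : Measure G) [μ.IsNegInvariant] {f : G → ℝ}
    (hf : Function.Odd f) {S : Set G} (hS : -S = S) :
    μ S ≤ 2 * μ (S ∩ {r | f r ≤ 0}) := by
  set T := S ∩ {r | f r ≤ 0}
  have hcover : S ⊆ T ∪ -T := by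
    intro r hr
    rcases le_total (f r) 0 with h | h
    · exact .inl ⟨hr, h⟩
    · refine .inr ⟨by rwa [← Set.mem_neg, hS], ?_⟩
      simpa [hf r] using h
  calc μ S ≤ μ T + μ (-T) := (measure_mono hcover).trans (measure_union_le _ _)
    _ = 2 * μ T := by rw [Measure.measure_neg, two_mul]

section SeminormedAddCommGroup

variable {E : Type*} [SeminormedAddCommGroup E]

lemma norm_bounds_of_norm_sub_le_div_three {p q : E} (h : ‖q - p‖ ≤ ‖q‖ / 3) :
    2 / 3 * ‖q‖ ≤ ‖p‖ ∧ ‖p‖ ≤ 4 / 3 * ‖q‖ := by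
  have hlower := norm_sub_norm_le q p
  have hupper := norm_sub_norm_le p q
  rw [norm_sub_rev] at hupper
  constructor <;> linarith

/-- The lune of momenta `r` inside the Fermi ball of radius `x` for which `r - p` lies outside it.
This is the domain of the inner integral in `belyakovI2q`. -/
def fermiLune (x : ℝ) (p : E) : Set E :=
  {r | ‖r‖ < x ∧ x < ‖r - p‖}

lemma isOpen_fermiLune (x : ℝ) (p : E) : IsOpen (fermiLune x p) :=
  (isOpen_lt continuous_norm continuous_const).inter
    (isOpen_lt continuous_const (continuous_id.sub continuous_const).norm)

lemma norm_sub_sq_sub_norm_sq_le_of_mem_fermiLune {x : ℝ} {p r : E} (hr : r ∈ fermiLune x p) :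
    ‖r - p‖ ^ 2 - ‖r‖ ^ 2 ≤ ‖p‖ ^ 2 + 2 * x * ‖p‖ := by
  have htriangle : ‖r - p‖ ^ 2 ≤ (‖r‖ + ‖p‖) ^ 2 := by
    gcongr
    exact norm_sub_le r p
  have hprod : ‖r‖ * ‖p‖ ≤ x * ‖p‖ := by
    gcongr
    exact hr.1.le
  linarith

/-- The integral over the lune of the inverse square of the excitation energy
`a + |r - p|² - |r|²`; the inner integrals of `belyakovI2q` are the cases
`a = |q + p|² - |q|²` and `a = |q|² - |q - p|²`. -/
noncomputable def luneIntegral [MeasurableSpace E] (μ : Measure E) (x a : ℝ) (p : E) : ℝ≥0∞ :=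
  ∫⁻ r in fermiLune x p, ENNReal.ofReal (1 / (a + ‖r - p‖ ^ 2 - ‖r‖ ^ 2) ^ 2) ∂μ

lemma ofReal_mul_measure_fermiLune_le_luneIntegral [MeasurableSpace E] [OpensMeasurableSpace E]
    (μ : Measure E) {x a A : ℝ} {p : E} (ha : 0 ≤ a) (hA : a + (‖p‖ ^ 2 + 2 * x * ‖p‖) ≤ A) :
    ENNReal.ofReal (1 / A ^ 2) * μ (fermiLune x p) ≤ luneIntegral μ x a p := by
  rw [luneIntegral, ← setLIntegral_const]
  refine setLIntegral_mono' (isOpen_fermiLune x p).measurableSet fun r hr => ?_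
  have hlt : ‖r‖ ^ 2 < ‖r - p‖ ^ 2 := by
    gcongr
    exact hr.1.trans hr.2
  have hpos : 0 < a + ‖r - p‖ ^ 2 - ‖r‖ ^ 2 := by linarith
  gcongr
  linarith [norm_sub_sq_sub_norm_sq_le_of_mem_fermiLune hr]

end SeminormedAddCommGroup

section FiniteDimensional

variable {E : Type*} [NormedAddCommGroup E] [NormedSpace ℝ E] [FiniteDimensional ℝ E]
  [MeasurableSpace E] [BorelSpace E] (μ : Measure E) [μ.IsAddHaarMeasure]

lemma measure_ball_sdiff_closedBall (c : E) {s x : ℝ} (hs : 0 ≤ s) (hsx : s < x) :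
    μ (ball c x \ closedBall c s) =
      ENNReal.ofReal (x ^ finrank ℝ E - s ^ finrank ℝ E) * μ (ball 0 1) := by
  rw [measure_sdiff (closedBall_subset_ball hsx) measurableSet_closedBall.nullMeasurableSet
      measure_closedBall_lt_top.ne,
    Measure.addHaar_ball_of_pos μ c (hs.trans_lt hsx), Measure.addHaar_closedBall μ c hs,
    ENNReal.ofReal_sub _ (by positivity), ENNReal.sub_mul fun _ _ => measure_ball_lt_top.ne]

end FiniteDimensional

section InnerProductSpace

variable {E : Type*} [NormedAddCommGroup E] [InnerProductSpace ℝ E]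

lemma shell_inter_inner_nonpos_subset_fermiLune {m s x : ℝ} {p : E} (hm : 0 ≤ m)
    (hs : 0 ≤ s) (hsm : s ^ 2 = x ^ 2 - m ^ 2) (hmp : m ≤ ‖p‖) :
    (ball 0 x \ closedBall 0 s) ∩ {r : E | inner ℝ r p ≤ 0} ⊆ fermiLune x p := by
  rintro r ⟨⟨hrx, hsr⟩, hinner⟩
  rw [mem_ball_zero_iff] at hrx
  rw [mem_closedBall_zero_iff, not_le] at hsr
  rw [Set.mem_ofPred_eq] at hinner
  refine ⟨hrx, lt_of_pow_lt_pow_left₀ 2 (norm_nonneg _) ?_⟩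
  calc x ^ 2 = s ^ 2 + m ^ 2 := by rw [hsm]; ring
    _ < ‖r‖ ^ 2 + ‖p‖ ^ 2 := add_lt_add_of_lt_of_le (by gcongr) (by gcongr)
    _ ≤ ‖r‖ ^ 2 - 2 * inner ℝ r p + ‖p‖ ^ 2 := by linarith
    _ = ‖r - p‖ ^ 2 := (norm_sub_sq_real r p).symm

variable [FiniteDimensional ℝ E] [MeasurableSpace E] [BorelSpace E] (μ : Measure E)
  [μ.IsAddHaarMeasure] {n : ℕ}

lemma le_measure_fermiLune (hn : finrank ℝ E = n + 2) {m x : ℝ} {p : E} (hm : 0 < m)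
    (hmx : m ≤ x) (hmp : m ≤ ‖p‖) :
    ENNReal.ofReal (x ^ n * m ^ 2 / 2) * μ (ball 0 1) ≤ μ (fermiLune x p) := by
  set s := √(x ^ 2 - m ^ 2)
  have hs0 : 0 ≤ s := Real.sqrt_nonneg _
  have hsm : s ^ 2 = x ^ 2 - m ^ 2 := Real.sq_sqrt (sub_nonneg.2 (by gcongr))
  have hsx : s < x := by
    refine lt_of_pow_lt_pow_left₀ 2 (hm.le.trans hmx) ?_
    rw [hsm]
    exact sub_lt_self _ (pow_pos hm 2)
  have hpow : x ^ n * m ^ 2 ≤ x ^ finrank ℝ E - s ^ finrank ℝ E := by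
    rw [hn, show m ^ 2 = x ^ 2 - s ^ 2 by rw [hsm]; ring]
    exact pow_mul_pow_sub_pow_le hs0 hsx.le n 2
  have hodd : Function.Odd fun r : E => inner ℝ r p := fun r => inner_neg_left r p
  have hneg : -(ball (0 : E) x \ closedBall 0 s) = ball 0 x \ closedBall 0 s := by
    ext; simp
  have htwo : ENNReal.ofReal (x ^ n * m ^ 2) * μ (ball 0 1) ≤ 2 * μ (fermiLune x p) :=
    calc ENNReal.ofReal (x ^ n * m ^ 2) * μ (ball 0 1)
        ≤ ENNReal.ofReal (x ^ finrank ℝ E - s ^ finrank ℝ E) * μ (ball 0 1) := by gcongr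
      _ = μ (ball 0 x \ closedBall 0 s) := (measure_ball_sdiff_closedBall μ 0 hs0 hsx).symm
      _ ≤ 2 * μ ((ball 0 x \ closedBall 0 s) ∩ {r | inner ℝ r p ≤ 0}) :=
          measure_le_two_mul_measure_inter_nonpos_of_odd μ hodd hneg
      _ ≤ 2 * μ (fermiLune x p) := by
          gcongr
          exact shell_inter_inner_nonpos_subset_fermiLune hm.le hs0 hsm hmp
  rw [ENNReal.ofReal_div_of_pos two_pos, ENNReal.ofReal_ofNat, ← ENNReal.mul_div_right_comm]
  exact ENNReal.div_le_of_le_mul' htwo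

theorem le_luneIntegral_of_norm_sub_le (hn : finrank ℝ E = n + 2) {x : ℝ} {p q : E}
    (hx : 0 < x) (hq : q ≠ 0) (hpq : ‖q - p‖ ≤ ‖q‖ / 3) :
    ENNReal.ofReal (1 / 162 * x ^ (n + 2) / (x ^ 4 + ‖q‖ ^ 4)) * μ (ball 0 1) ≤
      luneIntegral μ x (‖q‖ ^ 2 - ‖q - p‖ ^ 2) p := by
  have hq0 : 0 < ‖q‖ := norm_pos_iff.2 hq
  obtain ⟨hlower, hupper⟩ := norm_bounds_of_norm_sub_le_div_three hpq
  set m := 2 / 3 * min x ‖q‖ with hm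
  have hm0 : 0 < m := mul_pos (by norm_num) (lt_min hx hq0)
  have hmx : m ≤ x := by linarith [min_le_left x ‖q‖]
  have hmp : m ≤ ‖p‖ := by linarith [min_le_right x ‖q‖]
  have henergy : 0 ≤ ‖q‖ ^ 2 - ‖q - p‖ ^ 2 := sub_nonneg.2 (by gcongr; linarith)
  have hdenom : ‖q‖ ^ 2 - ‖q - p‖ ^ 2 + (‖p‖ ^ 2 + 2 * x * ‖p‖) ≤ 3 * ‖q‖ * (‖q‖ + x) :=
    calc ‖q‖ ^ 2 - ‖q - p‖ ^ 2 + (‖p‖ ^ 2 + 2 * x * ‖p‖)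
        ≤ ‖q‖ ^ 2 + ((4 / 3 * ‖q‖) ^ 2 + 2 * x * (4 / 3 * ‖q‖)) := by
          gcongr
          exact sub_le_self _ (sq_nonneg _)
      _ ≤ 3 * ‖q‖ * (‖q‖ + x) := by linarith [mul_pos hx hq0, pow_pos hq0 2]
  calc ENNReal.ofReal (1 / 162 * x ^ (n + 2) / (x ^ 4 + ‖q‖ ^ 4)) * μ (ball 0 1)
      ≤ ENNReal.ofReal (1 / (3 * ‖q‖ * (‖q‖ + x)) ^ 2 * (x ^ n * m ^ 2 / 2)) * μ (ball 0 1) := by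
        gcongr
        exact pow_div_pow_four_add_pow_four_le hx hq0 n
    _ = ENNReal.ofReal (1 / (3 * ‖q‖ * (‖q‖ + x)) ^ 2) *
          (ENNReal.ofReal (x ^ n * m ^ 2 / 2) * μ (ball 0 1)) := by
        rw [ENNReal.ofReal_mul (by positivity), mul_assoc]
    _ ≤ ENNReal.ofReal (1 / (3 * ‖q‖ * (‖q‖ + x)) ^ 2) * μ (fermiLune x p) := by
        gcongr
        exact le_measure_fermiLune μ hn hm0 hmx hmp
    _ ≤ luneIntegral μ x (‖q‖ ^ 2 - ‖q - p‖ ^ 2) p :=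
        ofReal_mul_measure_fermiLune_le_luneIntegral μ henergy hdenom

theorem le_setLIntegral_ball_luneIntegral (hn : finrank ℝ E = n + 2) {x ρ : ℝ} {q : E}
    (hx : 0 < x) (hq : q ≠ 0) (hρ : ρ ≤ ‖q‖ / 3) :
    ENNReal.ofReal (1 / 162 * x ^ (n + 2) / (x ^ 4 + ‖q‖ ^ 4)) * μ (ball 0 1) * μ (ball q ρ) ≤
      ∫⁻ p in ball q ρ, luneIntegral μ x (‖q‖ ^ 2 - ‖q - p‖ ^ 2) p ∂μ := by
  rw [← setLIntegral_const]
  refine setLIntegral_mono' measurableSet_ball fun p hp => ?_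
  exact le_luneIntegral_of_norm_sub_le μ hn hx hq ((mem_ball_iff_norm'.1 hp).le.trans hρ)

end InnerProductSpace

lemma setLIntegral_luneIntegral_le_belyakovI2q (x : ℝ) {q : E3} (hq : 1 < ‖q‖) :
    ∫⁻ p in ball q 1, luneIntegral volume x (‖q‖ ^ 2 - ‖q - p‖ ^ 2) p ≤ belyakovI2q x q := by
  have hball : ball q 1 = {p : E3 | ‖q - p‖ < 1 ∧ 1 < ‖q‖} := by
    ext p
    rw [mem_ball_iff_norm', Set.mem_ofPred_eq, and_iff_left hq]
  rw [← lintegral_indicator measurableSet_ball, hball]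
  exact lintegral_mono fun p => le_add_self

theorem belyakovI2q_lower_bound_large_q_general :
    ∃ c : ℝ, 0 < c ∧ ∀ (x : ℝ) (q : E3), 0 < x → 1 < ‖q‖ →
      ENNReal.ofReal (c * x ^ 3 / (x ^ 4 + ‖q‖ ^ 4)) ≤ belyakovI2q x q := by
  refine ⟨1 / 162 * (Real.pi * 4 / 3) * ((1 / 3) ^ 3 * (Real.pi * 4 / 3)), by positivity,
    fun x q hx hq => ?_⟩
  have hq0 : q ≠ 0 := norm_pos_iff.1 (one_pos.trans hq)
  calc ENNReal.ofReal (1 / 162 * (Real.pi * 4 / 3) * ((1 / 3) ^ 3 * (Real.pi * 4 / 3)) * x ^ 3 /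
        (x ^ 4 + ‖q‖ ^ 4))
      = ENNReal.ofReal (1 / 162 * x ^ 3 / (x ^ 4 + ‖q‖ ^ 4)) * volume (ball (0 : E3) 1) *
          volume (ball q (1 / 3)) := by
        rw [EuclideanSpace.volume_ball_fin_three, EuclideanSpace.volume_ball_fin_three,
          ENNReal.ofReal_one, one_pow, one_mul, ← ENNReal.ofReal_pow (by norm_num),
          ← ENNReal.ofReal_mul (by positivity), ← ENNReal.ofReal_mul (by positivity),
          ← ENNReal.ofReal_mul (by positivity)]
        congr 1
        ring
    _ ≤ ∫⁻ p in ball q (1 / 3), luneIntegral volume x (‖q‖ ^ 2 - ‖q - p‖ ^ 2) p :=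
        le_setLIntegral_ball_luneIntegral volume finrank_euclideanSpace_fin hx hq0 (by linarith)
    _ ≤ ∫⁻ p in ball q 1, luneIntegral volume x (‖q‖ ^ 2 - ‖q - p‖ ^ 2) p :=
        lintegral_mono_set (ball_subset_ball (by norm_num))
    _ ≤ belyakovI2q x q := setLIntegral_luneIntegral_le_belyakovI2q x hq

/-- Lower bound `I₂^{(q)}(x) ≥ c x³/(x⁴ + |q|⁴)` for `|q| ≥ 3` and all `x > 0`. -/
theorem belyakovI2q_lower_bound_large_q :
    ∃ c : ℝ, 0 < c ∧ ∀ (x : ℝ) (q : E3), 0 < x → 3 ≤ ‖q‖ →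
      ENNReal.ofReal (c * x ^ 3 / (x ^ 4 + ‖q‖ ^ 4)) ≤ belyakovI2q x q := by
  obtain ⟨c, hc, hbound⟩ := belyakovI2q_lower_bound_large_q_general
  exact ⟨c, hc, fun x q hx hq => hbound x q hx (by linarith)⟩
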